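/- Let q ∈ {2, 3, 5, 7}, let p be a prime with p ≡ 1 (mod 3) and p ≠ q, and let L, M be integers with 4p = L² + 27M². Then q is a cubic residue modulo p if and only if q divides L or q divides M. -/

import Mathlib

/-- Frobenius-fixed elements and the finite check. -/
theorem fin_check (q : ℕ) (hq : q ∈ ({2, 3, 5, 7} : Finset ℕ)) :
    ∀ x y : ZMod q, x ≠ y → y ≠ -1 - x - y → -1 - x - y ≠ x →
      1 - 3 * (x * y + y * (-1 - x - y) + (-1 - x - y) * x) ≠ 0 →
      (3 * x + 1) * (3 * y + 1) * (3 * (-1 - x - y) + 1) = 0 := by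
  simp only [Finset.mem_insert, Finset.mem_singleton] at hq
  rcases hq with rfl | rfl | rfl | rfl <;> decide

theorem field_split (q : ℕ) (hq : q ∈ ({2, 3, 5, 7} : Finset ℕ)) [Fact q.Prime]
    {K : Type*} [Field K] [CharP K q] (e0 e1 e2 P l m : K) (hP : P ≠ 0)
    (h1 : e0 + e1 + e2 = -1) (h2 : 3 * (e0 * e1 + e1 * e2 + e2 * e0) = 1 - P)
    (h3 : (3 * e0 + 1) * (3 * e1 + 1) * (3 * e2 + 1) = P * l)
    (hD : (e0 - e1) * (e1 - e2) * (e2 - e0) = P * m)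
    (f0 : e0 ^ q = e0) (f1 : e1 ^ q = e1) : l = 0 ∨ m = 0 := by
  by_cases hm : m = 0
  · exact Or.inr hm
  left
  have hne : (e0 - e1) * (e1 - e2) * (e2 - e0) ≠ 0 := by rw [hD]; exact mul_ne_zero hP hm
  let _ : Algebra (ZMod q) K := ZMod.algebra K q
  have lift (e : K) (he : e ^ q = e) : ∃ x : ZMod q, algebraMap (ZMod q) K x = e := by
    have := (FiniteField.roots_X_pow_card_sub_X (ZMod q))
    by_contra hcon
    push Not at hcon
    have hpoly : (Polynomial.X ^ q - Polynomial.X : Polynomial K) ≠ 0 :=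
      FiniteField.X_pow_card_sub_X_ne_zero K (Fact.out : q.Prime).one_lt
    have hcard := Polynomial.card_roots' (Polynomial.X ^ q - Polynomial.X : Polynomial K)
    rw [FiniteField.X_pow_card_sub_X_natDegree_eq K (Fact.out : q.Prime).one_lt] at hcard
    have hinj : Function.Injective (algebraMap (ZMod q) K) := (algebraMap (ZMod q) K).injective
    classical
    have hsub : insert e (Finset.univ.image (algebraMap (ZMod q) K)) ⊆
        (Polynomial.X ^ q - Polynomial.X : Polynomial K).roots.toFinset := by
      intro y hy
      rw [Multiset.mem_toFinset, Polynomial.mem_roots hpoly]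
      simp only [Finset.mem_insert, Finset.mem_image, Finset.mem_univ, true_and] at hy
      simp only [Polynomial.IsRoot.def, Polynomial.eval_sub, Polynomial.eval_pow,
        Polynomial.eval_X, sub_eq_zero]
      rcases hy with rfl | ⟨x, rfl⟩
      · exact he
      · rw [← map_pow, ZMod.pow_card]
    have h1 := Finset.card_le_card hsub
    rw [Finset.card_insert_of_notMem (by simpa using hcon),
      Finset.card_image_of_injective _ hinj, Finset.card_univ, ZMod.card] at h1
    have h2 := Multiset.toFinset_card_le (Polynomial.X ^ q - Polynomial.X : Polynomial K).roots
    omega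
  obtain ⟨x, rfl⟩ := lift e0 f0
  obtain ⟨y, rfl⟩ := lift e1 f1
  have hz : e2 = algebraMap (ZMod q) K (-1 - x - y) := by
    simp only [map_sub, map_neg, map_one]; linear_combination h1
  subst hz
  have hfin := fin_check q hq x y
    (by rintro rfl; simp at hne) (by intro h; rw [← h] at hne; simp at hne)
    (by intro h; rw [h] at hne; simp at hne)
    (by
      intro h
      apply hP
      have := congrArg (algebraMap (ZMod q) K) h
      simp only [map_sub, map_add, map_mul, map_neg, map_one, map_zero, map_ofNat] at this h2
      linear_combination this + h2)
  have := congrArg (algebraMap (ZMod q) K) hfin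
  simp only [map_sub, map_add, map_mul, map_neg, map_one, map_zero, map_ofNat] at this h3
  rw [h3] at this
  exact (mul_eq_zero.mp this).resolve_left hP

theorem field_cyc (q : ℕ) [Fact q.Prime]
    {K : Type*} [Field K] [CharP K q] (e0 e1 e2 P l m : K) (hP : P ≠ 0)
    (h1 : e0 + e1 + e2 = -1) (h2 : 3 * (e0 * e1 + e1 * e2 + e2 * e0) = 1 - P)
    (h3 : (3 * e0 + 1) * (3 * e1 + 1) * (3 * e2 + 1) = P * l)
    (hD : (e0 - e1) * (e1 - e2) * (e2 - e0) = P * m)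
    (f0 : e0 ^ q = e1) (f1 : e1 ^ q = e2) (f2 : e2 ^ q = e0) : ¬ (l = 0 ∨ m = 0) := by
  have key : ∀ a b : K, a ^ q = b → 3 * a + 1 = 0 → 3 * b + 1 = 0 := by
    intro a b hab h
    have := congrArg (frobenius K q) h
    simpa only [map_add, map_mul, map_ofNat, map_one, map_zero, frobenius_def, hab] using this
  rintro (rfl | rfl)
  · simp only [mul_zero, mul_eq_zero] at h3
    have : 3 * e0 + 1 = 0 ∧ 3 * e1 + 1 = 0 ∧ 3 * e2 + 1 = 0 := by
      rcases h3 with (h | h) | h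
      · have a := key _ _ f0 h; have b := key _ _ f1 a; exact ⟨h, a, b⟩
      · have a := key _ _ f1 h; have b := key _ _ f2 a; exact ⟨b, h, a⟩
      · have a := key _ _ f2 h; have b := key _ _ f0 a; exact ⟨a, b, h⟩
    obtain ⟨a, b, c⟩ := this
    have h30 : (3 : K) * P = 0 := by
      linear_combination 3 * h2 - (3 * e1 - 1) * a - (3 * e2 - 1) * b - (3 * e0 - 1) * c
    rcases mul_eq_zero.mp h30 with h | h
    · rw [h] at a; simp at a
    · exact hP h
  · simp only [mul_zero, mul_eq_zero, sub_eq_zero] at hD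
    have : e0 = e1 ∧ e1 = e2 := by
      rcases hD with (h | h) | h
      · exact ⟨h, by rw [← f1, ← h, f0, h]⟩
      · exact ⟨by rw [← f2, ← h, f1, h], h⟩
      · have : e0 = e1 := by rw [← f0, ← h, f2, h]
        exact ⟨this, by rw [← this, h]⟩
    obtain ⟨rfl, rfl⟩ := this
    apply hP
    linear_combination h2 - (3 * e0 - 1) * h1

theorem rep_unique (p : ℕ) (hp : p.Prime) (L M L' M' : ℤ)
    (h : (4 * p : ℤ) = L ^ 2 + 27 * M ^ 2) (h' : (4 * p : ℤ) = L' ^ 2 + 27 * M' ^ 2) :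
    L ^ 2 = L' ^ 2 ∧ M ^ 2 = M' ^ 2 := by
  have hp0 : (0 : ℤ) < p := by exact_mod_cast hp.pos
  have main : ∀ N : ℤ, 4 * (p : ℤ) = L' ^ 2 + 27 * N ^ 2 → (p : ℤ) ∣ L * N - L' * M →
      L ^ 2 = L' ^ 2 ∧ M ^ 2 = N ^ 2 := by
    rintro N hN ⟨k, hk⟩
    have h16 : 16 * (p : ℤ) ^ 2 = (L * L' + 27 * M * N) ^ 2 + 27 * (p * k) ^ 2 := by
      rw [← hk]; linear_combination (4 * p) * h + (L ^ 2 + 27 * M ^ 2) * hN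
    have hk0 : k = 0 := by
      by_contra hk0
      have hk1 : 0 < k ^ 2 := by positivity
      have : 1 ≤ k ^ 2 := hk1
      nlinarith [sq_nonneg (L * L' + 27 * M * N), mul_pos hp0 hp0]
    rw [hk0, mul_zero] at hk
    have : 4 * (p : ℤ) * (M ^ 2 - N ^ 2) = 0 := by
      linear_combination M ^ 2 * hN - N ^ 2 * h - (L * N + L' * M) * hk
    have h2 : M ^ 2 = N ^ 2 := by
      rcases mul_eq_zero.mp this with h0 | h0
      · omega
      · omega
    exact ⟨by linear_combination hN - h - 27 * h2, h2⟩
  have hdvd : (p : ℤ) ∣ (L * M' - L' * M) * (L * M' + L' * M) :=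
    ⟨4 * (M' ^ 2 - M ^ 2), by linear_combination M ^ 2 * h' - M' ^ 2 * h⟩
  rcases (Nat.prime_iff_prime_int.mp hp).dvd_or_dvd hdvd with hd | hd
  · exact main M' h' hd
  · have := main (-M') (by rw [h']; ring) (by
      rw [show L * -M' - L' * M = -(L * M' + L' * M) by ring]; exact (dvd_neg).mpr hd)
    exact ⟨this.1, by rw [this.2]; ring⟩

open Finset in
/-- Decomposition of a twisted sum by the value of a cubic character. -/
theorem cubic_decomp {F R : Type*} [Field F] [Fintype F] [CommRing R] [IsDomain R]
    [DecidableEq R] (w : R) (hw : IsPrimitiveRoot w 3) (χ : MulChar F R) (hχ : χ ^ 3 = 1)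
    {ι : Type*} [Fintype ι] (u : ι → F) (f : ι → R) :
    (∑ x, χ (u x) * f x = (∑ x with χ (u x) = 1, f x) + w * (∑ x with χ (u x) = w, f x)
      + w ^ 2 * (∑ x with χ (u x) = w ^ 2, f x)) ∧
    (∑ x, χ⁻¹ (u x) * f x = (∑ x with χ (u x) = 1, f x) + w ^ 2 * (∑ x with χ (u x) = w, f x)
      + w * (∑ x with χ (u x) = w ^ 2, f x)) ∧
    (∑ x, (1 : MulChar F R) (u x) * f x = (∑ x with χ (u x) = 1, f x)
      + (∑ x with χ (u x) = w, f x) + (∑ x with χ (u x) = w ^ 2, f x)) := by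
  have hinv : χ⁻¹ = χ ^ 2 := by
    rw [inv_eq_iff_mul_eq_one, ← pow_succ', hχ]
  have hw3 := hw.pow_eq_one
  have h1w : (1 : R) ≠ w := (hw.ne_one (by norm_num)).symm
  have h1w2 : (1 : R) ≠ w ^ 2 := by
    intro h
    have := hw.pow_inj (i := 0) (j := 2) (by norm_num) (by norm_num) (by simpa using h)
    omega
  have hww2 : w ≠ w ^ 2 := by
    intro h
    have := hw.pow_inj (i := 1) (j := 2) (by norm_num) (by norm_num) (by simpa using h)
    omega
  have h01 : (0 : R) ≠ 1 := zero_ne_one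
  have hw0 : w ≠ 0 := hw.ne_zero (by norm_num)
  have hcases : ∀ a : F, a ≠ 0 → χ a = 1 ∨ χ a = w ∨ χ a = w ^ 2 := by
    intro a ha
    obtain ⟨k, hk, h⟩ := MulChar.exists_apply_eq_pow hχ hw ha
    interval_cases k <;> simp [h]
  simp only [sum_filter, mul_sum, ← sum_add_distrib, hinv]
  refine ⟨sum_congr rfl fun x _ ↦ ?_, sum_congr rfl fun x _ ↦ ?_, sum_congr rfl fun x _ ↦ ?_⟩
  all_goals
    by_cases hx : u x = 0
    · simp [hx, MulChar.map_zero, h01, hw0.symm, (pow_ne_zero 2 hw0).symm]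
    · have hone := MulChar.one_apply (R' := R) (isUnit_iff_ne_zero.mpr hx)
      try rw [MulChar.pow_apply' _ two_ne_zero]
      try rw [hone]
      rcases hcases _ hx with h | h | h <;>
      simp [h, h1w, h1w2, hww2, h1w.symm, h1w2.symm, hww2.symm]
      try exact Or.inl (by linear_combination w * hw3)

theorem int_indep {R : Type*} [CommRing R] [IsDomain R] [CharZero R] (w : R)
    (hw : w ^ 2 + w + 1 = 0) (x y : ℤ) (h : (x : R) + y * w = 0) : y = 0 := by
  have : ((x ^ 2 - x * y + y ^ 2 : ℤ) : R) = 0 := by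
    push_cast
    linear_combination (x - y - y * w) * h + (y : R) ^ 2 * hw
  have : x ^ 2 - x * y + y ^ 2 = 0 := by exact_mod_cast this
  nlinarith [sq_nonneg (2 * x - y), sq_nonneg y, sq_nonneg x]

theorem adjoin_rep {R : Type*} [CommRing R] (w : R) (hw : w ^ 2 + w + 1 = 0) (z : R)
    (hz : z ∈ Algebra.adjoin ℤ {w}) : ∃ c d : ℤ, z = c + d * w := by
  induction hz using Algebra.adjoin_induction with
  | mem x hx => exact ⟨0, 1, by simpa using hx⟩
  | algebraMap r => exact ⟨r, 0, by simp⟩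
  | add x y _ _ hx hy =>
    obtain ⟨a, b, rfl⟩ := hx
    obtain ⟨c, d, rfl⟩ := hy
    exact ⟨a + c, b + d, by push_cast; ring⟩
  | mul x y _ _ hx hy =>
    obtain ⟨a, b, rfl⟩ := hx
    obtain ⟨c, d, rfl⟩ := hy
    exact ⟨a * c - b * d, a * d + b * c - b * d, by
      push_cast; linear_combination (b * d : R) * hw⟩

theorem periods {R : Type*} [CommRing R] [IsDomain R] [CharZero R] [DecidableEq R]
    (p : ℕ) [Fact p.Prime] (hp3 : p % 3 = 1)
    (w : R) (hw : IsPrimitiveRoot w 3) (χ : MulChar (ZMod p) R) (hχ : orderOf χ = 3)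
    (ψ : AddChar (ZMod p) R) (hψ : ψ.IsPrimitive) (e : R → R)
    (he : ∀ c, e c = ∑ x with χ x = c, ψ x) :
    ∃ L M : ℤ, (4 * p : ℤ) = L ^ 2 + 27 * M ^ 2 ∧
      e 1 + e w + e (w ^ 2) = -1 ∧
      3 * (e 1 * e w + e w * e (w ^ 2) + e (w ^ 2) * e 1) = 1 - (p : R) ∧
      (3 * e 1 + 1) * (3 * e w + 1) * (3 * e (w ^ 2) + 1) = p * (L : R) ∧
      (e 1 - e w) * (e w - e (w ^ 2)) * (e (w ^ 2) - e 1) = p * (M : R) := by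
  have hχ3 : χ ^ 3 = 1 := hχ ▸ pow_orderOf_eq_one χ
  have hχ1 : χ ≠ 1 := by
    rintro rfl; simp at hχ
  have hχi1 : χ⁻¹ ≠ 1 := by simpa using hχ1
  have hinv : χ⁻¹ = χ ^ 2 := by
    rw [inv_eq_iff_mul_eq_one, ← pow_succ', hχ3]
  have hinv2 : χ⁻¹ ^ 2 = χ := by
    rw [hinv, ← pow_mul, show 2 * 2 = 3 + 1 by rfl, pow_succ, hχ3, one_mul]
  have hneg : χ (-1) = 1 := by
    have h1 : χ (-1) ^ 3 = 1 := by
      rw [← MulChar.pow_apply' _ (by norm_num), hχ3, MulChar.one_apply (by simp)]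
    have h2 : χ (-1) ^ 2 = 1 := by rw [← map_pow]; simp
    calc χ (-1) = χ (-1) ^ 3 := by rw [pow_succ, h2, one_mul]
      _ = 1 := h1
  have hw1 : w ^ 2 + w + 1 = 0 := by
    have := hw.geom_sum_eq_zero (by norm_num)
    simp [Finset.sum_range_succ] at this
    linear_combination this
  have hp0 : (p : R) ≠ 0 := by exact_mod_cast (Fact.out : p.Prime).ne_zero
  have hψ1 : ψ ≠ 1 := by
    intro h
    exact hψ one_ne_zero (by rw [h]; ext; simp)
  obtain ⟨d1, d2, d3⟩ := cubic_decomp w hw χ hχ3 (fun x : ZMod p ↦ x) (fun x ↦ ψ x)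
  simp only [← he] at d1 d2 d3
  have g0 := gaussSum_one_left (R' := R) hψ1
  rw [gaussSum, d3] at g0
  obtain ⟨j1, j2, j3⟩ := cubic_decomp w hw χ hχ3 (fun x : ZMod p ↦ x * (1 - x)) (fun _ ↦ 1)
  simp only [Finset.sum_const, nsmul_eq_mul, mul_one] at j1 j2 j3
  obtain ⟨n0, n1, n2, j1, j2⟩ : ∃ n0 n1 n2 : ℤ,
      jacobiSum χ χ = n0 + w * n1 + w ^ 2 * n2 ∧
      jacobiSum χ⁻¹ χ⁻¹ = n0 + w ^ 2 * n1 + w * n2 := by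
    refine ⟨({x : ZMod p | χ (x * (1 - x)) = 1} : Finset (ZMod p)).card,
      ({x : ZMod p | χ (x * (1 - x)) = w} : Finset (ZMod p)).card,
      ({x : ZMod p | χ (x * (1 - x)) = w ^ 2} : Finset (ZMod p)).card, ?_, ?_⟩
    · simp only [jacobiSum, ← map_mul, Int.cast_natCast]
      exact j1
    · simp only [jacobiSum, ← map_mul, Int.cast_natCast]
      exact j2
  have c1 : gaussSum χ ψ ^ 3 = p * jacobiSum χ χ := by
    have := gaussSum_pow_eq_prod_jacobiSum (χ := χ) (by omega) hψ
    rw [hχ, hneg, ZMod.card] at this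
    simpa using this
  have c2 : gaussSum χ⁻¹ ψ ^ 3 = p * jacobiSum χ⁻¹ χ⁻¹ := by
    have hoi : orderOf χ⁻¹ = 3 := by rw [orderOf_inv, hχ]
    have := gaussSum_pow_eq_prod_jacobiSum (χ := χ⁻¹) (by omega) hψ
    rw [hoi, hinv, MulChar.pow_apply' _ two_ne_zero, hneg, ZMod.card, ← hinv] at this
    simpa using this
  have c3 : gaussSum χ ψ * gaussSum χ⁻¹ ψ = p := by
    have := gaussSum_mul_gaussSum_pow_orderOf_sub_one hχ1 hψ
    rw [hχ, hneg, ZMod.card] at this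
    simpa [hinv] using this
  obtain ⟨z, hz, hJ⟩ := exists_jacobiSum_eq_neg_one_add (n := 3) (by norm_num) hχ3 hχ3
    (by rw [ZMod.card]; omega) hw
  obtain ⟨c, d, rfl⟩ := adjoin_rep w hw1 z hz
  have hM : n1 - n2 - 3 * (d - c) = 0 := by
    refine int_indep w hw1 (n0 - n2 + 1 - 3 * d) _ ?_
    rw [j1] at hJ
    push_cast
    linear_combination hJ - (n2 : R) * hw1 + (c + d * w - 3 * d : R) * hw1
  rw [j1] at c1
  rw [j2] at c2
  change gaussSum χ ψ = _ at d1
  change gaussSum χ⁻¹ ψ = _ at d2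
  generalize gaussSum χ ψ = g at *
  generalize gaussSum χ⁻¹ ψ = g' at *
  generalize e 1 = x at *
  generalize e w = y at *
  generalize e (w ^ 2) = v at *
  have hM' : (n1 : R) - n2 - 3 * (d - c) = 0 := by exact_mod_cast hM
  have h3 : (3 : R) ≠ 0 := by norm_num
  have hw3 := hw.pow_eq_one
  have hw2 : w ^ 2 = -w - 1 := by linear_combination hw1
  have hww : 2 * w + 1 ≠ 0 := by
    intro h
    apply h3
    linear_combination 4 * hw1 - (2 * w + 1) * h
  rw [hw2] at c1 c2 d1 d2
  have a1 : g ^ 3 + g' ^ 3 = p * (2 * (n0 - n2) - (n1 - n2)) := by rw [c1, c2]; ring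
  have a2 : g ^ 3 - g' ^ 3 = p * ((2 * w + 1) * (n1 - n2)) := by rw [c1, c2]; ring
  have hJJ : ((n0 - n2) ^ 2 - (n0 - n2) * (n1 - n2) + (n1 - n2) ^ 2 : ℤ) = p := by
    have : (p : R) ^ 2 * ((n0 - n2) ^ 2 - (n0 - n2) * (n1 - n2) + (n1 - n2) ^ 2)
        = (p : R) ^ 2 * p := by
      have e1 : (g * g') ^ 3 = p ^ 3 := by rw [c3]
      rw [mul_pow, c1, c2] at e1
      linear_combination e1 + (p : R) ^ 2 * ((n1 - n2) ^ 2) * hw1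
    have := mul_left_cancel₀ (pow_ne_zero 2 hp0) this
    exact_mod_cast this
  refine ⟨2 * (n0 - n2) - (n1 - n2), c - d, ?_, g0, ?_, ?_, ?_⟩
  · rw [← hJJ, show n1 = n2 + 3 * (d - c) by linear_combination hM]
    ring
  · clear a1 a2 c1 c2
    have hv : v = -1 - x - y := by linear_combination g0
    subst hv d1 d2
    rw [← c3]
    ring_nf
    simp only [hw2]
    ring
  · push_cast
    rw [← a1]
    clear a1 a2 c1 c2 c3
    have hv : v = -1 - x - y := by linear_combination g0
    have q0 : 3 * x + 1 = g + g' := by rw [d1, d2, hv]; ring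
    have q1 : 3 * y + 1 = (-w - 1) * g + w * g' := by
      rw [d1, d2, hv]; ring_nf; simp only [hw2]; ring
    have q2 : 3 * v + 1 = w * g + (-w - 1) * g' := by
      rw [d1, d2, hv]; ring_nf; simp only [hw2]; ring
    rw [q0, q1, q2]
    linear_combination (-(g + g') * (g - g') ^ 2) * hw1
  · apply mul_left_cancel₀ h3
    apply mul_left_cancel₀ hww
    push_cast
    have : g - g' = (2 * w + 1) * (y - v) := by rw [d1, d2]; ring
    have r1 : g - w * g' = (1 - w) * (x - y) := by
      rw [d1, d2]; linear_combination (y - v) * hw1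
    have r2 : g - (-w - 1) * g' = (2 + w) * (x - v) := by
      rw [d1, d2]; linear_combination (v - y) * hw1
    have r3 : g ^ 3 - g' ^ 3 = (g - g') * (g - w * g') * (g - (-w - 1) * g') := by
      linear_combination (g - g') * g' ^ 2 * hw1
    rw [a2, this, r1, r2] at r3
    linear_combination r3 - (p * (2 * w + 1) : R) * hM' -
      (2 * w + 1) * (y - v) * (x - y) * (x - v) * hw1

open Finset in
theorem period_frob {R K : Type*} [CommRing R] [DecidableEq R] [IsDomain R]
    [Field K] (f : R →+* K) (p q : ℕ) [Fact p.Prime] [Fact q.Prime] [CharP K q] (hpq : p ≠ q)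
    (χ : MulChar (ZMod p) R) (ψ : AddChar (ZMod p) R) (c : R) :
    f (∑ x with χ x = c, ψ x) ^ q = f (∑ x with χ x = c * χ (q : ZMod p), ψ x) := by
  have hq0 : (q : ZMod p) ≠ 0 := by
    rw [Ne, ZMod.natCast_eq_zero_iff, Nat.prime_dvd_prime_iff_eq Fact.out Fact.out]
    exact hpq
  have hχq : χ (q : ZMod p) ≠ 0 := ((isUnit_iff_ne_zero.mpr hq0).map χ).ne_zero
  rw [map_sum, map_sum, ← frobenius_def, map_sum]
  refine sum_bij (fun a _ ↦ a * q) ?_ ?_ ?_ ?_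
  · intro a ha
    simp only [mem_filter, mem_univ, true_and] at ha ⊢
    rw [map_mul, ha]
  · intro a _ b _ hab
    exact mul_right_cancel₀ hq0 hab
  · intro b hb
    refine ⟨b / q, ?_, div_mul_cancel₀ _ hq0⟩
    simp only [mem_filter, mem_univ, true_and] at hb ⊢
    apply mul_right_cancel₀ hχq
    rw [← map_mul, div_mul_cancel₀ _ hq0, hb]
  · intro a _
    rw [frobenius_def, ← map_pow, ← AddChar.map_nsmul_eq_pow, nsmul_eq_mul, mul_comm]

theorem cube_iff {R : Type*} [CommRing R] [IsDomain R]
    (p q : ℕ) [Fact p.Prime] [Fact q.Prime] (hpq : p ≠ q)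
    (χ : MulChar (ZMod p) R) (hχ : orderOf χ = 3) :
    (∃ x : ℤ, x ^ 3 ≡ (q : ℤ) [ZMOD (p : ℤ)]) ↔ χ (q : ZMod p) = 1 := by
  have hq0 : (q : ZMod p) ≠ 0 := by
    rw [Ne, ZMod.natCast_eq_zero_iff, Nat.prime_dvd_prime_iff_eq Fact.out Fact.out]
    exact hpq
  have hχ3 : χ ^ 3 = 1 := hχ ▸ pow_orderOf_eq_one χ
  have hiff : ∀ x : ℤ, x ^ 3 ≡ (q : ℤ) [ZMOD (p : ℤ)] ↔ (x : ZMod p) ^ 3 = q := by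
    intro x
    rw [← ZMod.intCast_eq_intCast_iff]
    push_cast
    rfl
  simp only [hiff]
  constructor
  · rintro ⟨x, hx⟩
    have hx0 : (x : ZMod p) ≠ 0 := by
      intro h
      rw [h] at hx
      exact hq0 (by rw [← hx]; simp)
    rw [← hx, map_pow, ← MulChar.pow_apply' _ (by norm_num), hχ3,
      MulChar.one_apply (isUnit_iff_ne_zero.mpr hx0)]
  · intro h
    obtain ⟨g, hg⟩ := IsCyclic.exists_generator (α := (ZMod p)ˣ)
    obtain ⟨k, hk⟩ := mem_powers_iff_mem_zpowers.mpr (hg (Units.mk0 _ hq0))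
    have hk' : (q : ZMod p) = (g : ZMod p) ^ k := by
      have := congrArg Units.val hk
      simpa using this.symm
    have hk1 : χ ^ k = 1 := by
      rw [MulChar.eq_iff hg, MulChar.pow_apply_coe, ← map_pow, ← hk', h]
      simp
    obtain ⟨m, rfl⟩ : 3 ∣ k := hχ ▸ orderOf_dvd_of_pow_eq_one hk1
    refine ⟨((g : ZMod p) ^ m).val, ?_⟩
    rw [hk']
    simp
    ring

theorem exists_setup (p q : ℕ) (hp : p.Prime) (hq : q.Prime) :
    ∃ (R : Type) (_ : CommRing R) (_ : IsDomain R) (_ : CharZero R)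
      (K : Type) (_ : Field K) (_ : CharP K q) (_ : R →+* K) (w z : R),
      IsPrimitiveRoot w 3 ∧ IsPrimitiveRoot z p := by
  let A := integralClosure ℤ ℂ
  have hroot : ∀ n : ℕ, n ≠ 0 → ∃ w : A, IsPrimitiveRoot w n := by
    intro n hn
    have h := Complex.isPrimitiveRoot_exp n hn
    exact ⟨⟨_, h.isIntegral (Nat.pos_of_ne_zero hn)⟩, by
      rw [← IsPrimitiveRoot.map_iff_of_injective (f := A.val) Subtype.val_injective]
      exact h⟩
  obtain ⟨w, hw⟩ := hroot 3 (by norm_num)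
  obtain ⟨z, hz⟩ := hroot p hp.ne_zero
  have hmax : (Ideal.span {(q : ℤ)}).IsMaximal :=
    PrincipalIdealRing.isMaximal_of_irreducible (Nat.prime_iff_prime_int.mp hq).irreducible
  obtain ⟨Q, hQ, hQ'⟩ := Ideal.exists_maximal_ideal_liesOver_of_isIntegral (S := A)
    (Ideal.span {(q : ℤ)})
  let F : Field (A ⧸ Q) := Ideal.Quotient.field Q
  refine ⟨A, inferInstance, inferInstance, inferInstance, A ⧸ Q, F, ?_, Ideal.Quotient.mk Q,
    w, z, hw, hz⟩
  have : Fact q.Prime := ⟨hq⟩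
  have h0 : ((q : ℕ) : A ⧸ Q) = 0 := by
    have h1 : (q : ℤ) ∈ Q.under ℤ := by
      rw [← hQ'.over]; exact Ideal.mem_span_singleton_self _
    rw [Ideal.mem_comap] at h1
    have := Ideal.Quotient.eq_zero_iff_mem.mpr h1
    simpa using this
  exact (CharP.charP_iff_prime_eq_zero hq).mpr h0

/-- For `q ∈ {2, 3, 5, 7}` and a prime `p ≡ 1 (mod 3)`, `p ≠ q`, with `4p = L² + 27M²`,
`q` is a cubic residue mod `p` iff `q ∣ L` or `q ∣ M`. -/
theorem small_q_cubic_residue (q p : ℕ) (hq : q ∈ ({2, 3, 5, 7} : Finset ℕ))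
    (hp : p.Prime) (hp3 : p % 3 = 1) (hpq : p ≠ q)
    (L M : ℤ) (h : (4 * p : ℤ) = L ^ 2 + 27 * M ^ 2) :
    (∃ x : ℤ, x ^ 3 ≡ (q : ℤ) [ZMOD (p : ℤ)]) ↔ ((q : ℤ) ∣ L ∨ (q : ℤ) ∣ M) := by
  classical
  have hqp : q.Prime := by
    simp only [Finset.mem_insert, Finset.mem_singleton] at hq
    rcases hq with rfl | rfl | rfl | rfl <;> norm_num
  have : Fact q.Prime := ⟨hqp⟩
  have : Fact p.Prime := ⟨hp⟩
  obtain ⟨R, _, _, _, K, _, _, f, w, z, hw, hz⟩ := exists_setup p q hp hqp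
  obtain ⟨χ, hχ⟩ := MulChar.exists_mulChar_orderOf (ZMod p) (n := 3)
    (by rw [ZMod.card]; omega) hw
  have hψ := AddChar.zmodChar_primitive_of_primitive_root p hz
  obtain ⟨ψ, hψ⟩ : ∃ ψ : AddChar (ZMod p) R, ψ.IsPrimitive := ⟨_, hψ⟩
  obtain ⟨E, hE⟩ : ∃ E : R → R, ∀ c, E c = ∑ x with χ x = c, ψ x := ⟨_, fun _ ↦ rfl⟩
  obtain ⟨L', M', hLM, h1, h2, h3, h4⟩ := periods p hp3 w hw χ hχ ψ hψ E hE
  have hfr := period_frob f p q hpq χ ψ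
  rw [cube_iff p q hpq χ hχ]
  obtain ⟨hL, hM⟩ := rep_unique p hp L M L' M' h hLM
  have hqi : Prime (q : ℤ) := Nat.prime_iff_prime_int.mp hqp
  have eL : (q : ℤ) ∣ L ↔ (L' : K) = 0 := by
    rw [CharP.intCast_eq_zero_iff K q, ← hqi.dvd_pow_iff_dvd two_ne_zero, hL,
      hqi.dvd_pow_iff_dvd two_ne_zero]
  have eM : (q : ℤ) ∣ M ↔ (M' : K) = 0 := by
    rw [CharP.intCast_eq_zero_iff K q, ← hqi.dvd_pow_iff_dvd two_ne_zero, hM,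
      hqi.dvd_pow_iff_dvd two_ne_zero]
  rw [eL, eM]
  have hP : (p : K) ≠ 0 := by
    rw [Ne, CharP.cast_eq_zero_iff K q, Nat.prime_dvd_prime_iff_eq hqp hp]
    exact hpq.symm
  have hw3 := hw.pow_eq_one
  have hfr' : ∀ c, f (E c) ^ q = f (E (c * χ (q : ZMod p))) := by
    intro c; rw [hE, hE]; exact hfr c
  replace h1 := congrArg f h1
  replace h2 := congrArg f h2
  replace h3 := congrArg f h3
  replace h4 := congrArg f h4
  simp only [map_add, map_sub, map_mul, map_neg, map_one, map_ofNat, map_natCast,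
    map_intCast] at h1 h2 h3 h4
  have hq0 : (q : ZMod p) ≠ 0 := by
    rw [Ne, ZMod.natCast_eq_zero_iff, Nat.prime_dvd_prime_iff_eq hp hqp]
    exact hpq
  constructor
  · intro hc
    simp only [hc, mul_one] at hfr'
    exact field_split q hq _ _ _ _ _ _ hP h1 h2 h3 h4 (hfr' 1) (hfr' w)
  · intro hlm
    by_contra hc
    have hχ3 : χ ^ 3 = 1 := hχ ▸ pow_orderOf_eq_one χ
    obtain ⟨k, hk, hkw⟩ := MulChar.exists_apply_eq_pow hχ3 hw hq0
    interval_cases k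
    · exact hc (by simpa using hkw)
    · rw [pow_one] at hkw
      rw [hkw] at hfr'
      have f0 := hfr' 1
      have f1 := hfr' w
      have f2 := hfr' (w ^ 2)
      rw [one_mul] at f0
      rw [← pow_two] at f1
      rw [← pow_succ, hw3] at f2
      exact field_cyc q _ _ _ _ _ _ hP h1 h2 h3 h4 f0 f1 f2 hlm
    · rw [hkw] at hfr'
      have f0 := hfr' 1
      have f1 := hfr' w
      have f2 := hfr' (w ^ 2)
      rw [one_mul] at f0
      rw [← pow_succ', hw3] at f1
      rw [show w ^ 2 * w ^ 2 = w by linear_combination w * hw3] at f2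
      refine field_cyc q (f (E 1)) (f (E (w ^ 2))) (f (E w)) p L' (-M') hP ?_ ?_ ?_ ?_ f0 f2 f1
        (by simpa using hlm)
      · linear_combination h1
      · linear_combination h2
      · linear_combination h3
      · linear_combination -h4
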